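/- arXiv:2211.08555 — 6 statements merged into one kernel-verified Lean document; each statement's English description precedes it below -/
import Mathlib

section
/- Let (A,B) be a Pythagorean pair on a complex Hilbert space H, let x = (x_1, x_2, …) ∈ {0,1}^ℕ be an infinite binary sequence, and for X_0 = A, X_1 = B set p_0 = 1 and p_n := X_{x_n} ⋯ X_{x_1} (the operators along the prefixes of the branch x), and set q_n := X_{1 − x_{n+1}} p_n (the operator at the sibling vertex of the (n+1)-st vertex of the branch). If ξ ∈ H satisfies ‖p_n ξ‖ → 0 as n → ∞, then Σ_{n=0}^{∞} ‖q_n ξ‖² = ‖ξ‖². -/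
/-!
Applying the Pythagorean identity `‖A v‖² + ‖B v‖² = ‖v‖²` to `v = p_n ξ` gives
`‖q_n ξ‖² = ‖p_n ξ‖² - ‖p_{n+1} ξ‖²`, so the partial sums telescope to `‖ξ‖² - ‖p_n ξ‖²`,
which tends to `‖ξ‖²`. As the terms are nonnegative, this convergence of partial sums is the same
as unconditional summability.
-/

open Filter

/-- The operators along the prefixes of an infinite binary branch `x`:
`branchOp A B x 0 = 1` and `branchOp A B x (n+1) = X_{x n} ∘ branchOp A B x n`,
where `X_false = A` and `X_true = B`. (With 1-based indexing this is
`p_n = X_{x_n} ⋯ X_{x_1}`.) -/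
noncomputable def branchOp {H : Type*} [NormedAddCommGroup H] [InnerProductSpace ℂ H]
    (A B : H →L[ℂ] H) (x : ℕ → Bool) : ℕ → (H →L[ℂ] H)
  | 0 => 1
  | (n + 1) => (if x n then B else A) ∘L branchOp A B x n

/-- The Pythagorean identity in vector form. -/
theorem norm_sq_add_norm_sq_of_pythagorean
    {H : Type*} [NormedAddCommGroup H] [InnerProductSpace ℂ H] [CompleteSpace H]
    (A B : H →L[ℂ] H)
    (hPy : ContinuousLinearMap.adjoint A ∘L A + ContinuousLinearMap.adjoint B ∘L B = 1)
    (v : H) : ‖A v‖ ^ 2 + ‖B v‖ ^ 2 = ‖v‖ ^ 2 := by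
  have h := congrArg (fun T : H →L[ℂ] H => RCLike.re (inner ℂ (T v) v)) hPy
  simp only [ContinuousLinearMap.add_apply, ContinuousLinearMap.comp_apply, inner_add_left,
    ContinuousLinearMap.adjoint_inner_left, ContinuousLinearMap.one_apply, map_add,
    inner_self_eq_norm_sq] at h
  exact h

/-- Let `(A,B)` be a Pythagorean pair on a complex Hilbert space `H`, let
`x` be an infinite binary sequence with branch operators `p_n` and sibling operators
`q_n = X_{1 - x_{n+1}} ∘ p_n`. If `ξ ∈ H` satisfies `‖p_n ξ‖ → 0`, then
`∑_{n=0}^∞ ‖q_n ξ‖² = ‖ξ‖²`. -/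
theorem pythagorean_pair_branch_hasSum
    {H : Type*} [NormedAddCommGroup H] [InnerProductSpace ℂ H] [CompleteSpace H]
    (A B : H →L[ℂ] H)
    (hPy : ContinuousLinearMap.adjoint A ∘L A + ContinuousLinearMap.adjoint B ∘L B = 1)
    (x : ℕ → Bool) (ξ : H)
    (hp : Tendsto (fun n => ‖branchOp A B x n ξ‖) atTop (nhds 0)) :
    HasSum (fun n => ‖((if x n then A else B) ∘L branchOp A B x n) ξ‖ ^ 2) (‖ξ‖ ^ 2) := by
  have step : ∀ n, ‖((if x n then A else B) ∘L branchOp A B x n) ξ‖ ^ 2 =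
      ‖branchOp A B x n ξ‖ ^ 2 - ‖branchOp A B x (n + 1) ξ‖ ^ 2 := by
    intro n
    have h := norm_sq_add_norm_sq_of_pythagorean A B hPy (branchOp A B x n ξ)
    cases hx : x n <;> simp [branchOp, hx] <;> linarith
  rw [hasSum_iff_tendsto_nat_of_nonneg (fun n => by positivity)]
  simp_rw [step, Finset.sum_range_sub']
  simpa [branchOp] using (hp.pow 2).const_sub (‖ξ‖ ^ 2)
end

section
/- Let (A,B) be a Pythagorean pair on a complex Hilbert space H such that A^n ξ → 0 and B^n ξ → 0 in norm for every ξ ∈ H. Then for every ξ ∈ H one has Σ_{j=0}^{∞} ‖A B^j ξ‖² = ‖ξ‖² and Σ_{j=0}^{∞} ‖B A^j ξ‖² = ‖ξ‖²; consequently the maps L_∞ : ξ ↦ (A B^j ξ)_{j≥0} and R_∞ : ξ ↦ (B A^j ξ)_{j≥0} are well-defined linear isometries from H into ℓ²(ℕ, H). -/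
/-!
Evaluating `A*A + B*B = 1` in the quadratic form gives `‖A η‖² + ‖B η‖² = ‖η‖²` for all `η`
(`norm_sq_add_of_pythagorean`). With `η = B^j ξ` this reads
`‖A B^j ξ‖² = ‖B^j ξ‖² - ‖B^(j+1) ξ‖²`, so the series telescopes: its `n`-th partial sum is
`‖ξ‖² - ‖B^n ξ‖²`, which tends to `‖ξ‖²` (`hasSum_norm_sq_of_tendsto`). Square-summability puts
the sequence in `ℓ²`, and the value of the sum says that the resulting linear map is isometric
(`exists_linearIsometry_of_hasSum`). The second half follows by exchanging `A` and `B`.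
-/

open Filter

section

variable {H : Type*} [NormedAddCommGroup H] [InnerProductSpace ℂ H]

theorem norm_sq_add_of_pythagorean [CompleteSpace H] {A B : H →L[ℂ] H}
    (hPy : ContinuousLinearMap.adjoint A ∘L A + ContinuousLinearMap.adjoint B ∘L B = 1)
    (η : H) : ‖A η‖ ^ 2 + ‖B η‖ ^ 2 = ‖η‖ ^ 2 := by
  rw [A.apply_norm_sq_eq_inner_adjoint_left, B.apply_norm_sq_eq_inner_adjoint_left,
    ← map_add, ← inner_add_left, ← add_apply, hPy,
    one_apply_eq_self, inner_self_eq_norm_sq]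

/-- The telescoping argument; only the powers of `B` have to tend to zero. -/
theorem hasSum_norm_sq_of_tendsto {A B : H →L[ℂ] H}
    (h : ∀ η : H, ‖A η‖ ^ 2 + ‖B η‖ ^ 2 = ‖η‖ ^ 2) {ξ : H}
    (hB : Tendsto (fun n => (B ^ n) ξ) atTop (nhds 0)) :
    HasSum (fun j : ℕ => ‖A ((B ^ j) ξ)‖ ^ 2) (‖ξ‖ ^ 2) := by
  rw [hasSum_iff_tendsto_nat_of_nonneg (fun _ => by positivity)]
  have partial_sum (n : ℕ) :
      ∑ j ∈ Finset.range n, ‖A ((B ^ j) ξ)‖ ^ 2 = ‖ξ‖ ^ 2 - ‖(B ^ n) ξ‖ ^ 2 := by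
    induction n with
    | zero => simp
    | succ n ih =>
      rw [Finset.sum_range_succ, ih, pow_succ' B, mul_apply_eq_comp]
      linarith [h ((B ^ n) ξ)]
  simp_rw [partial_sum]
  simpa using (hB.norm.pow 2).const_sub (‖ξ‖ ^ 2)

/-- A sequence of operators with `∑ ‖T j ξ‖² = ‖ξ‖²` assembles into an isometry into `ℓ²`. -/
theorem exists_linearIsometry_of_hasSum (T : ℕ → H →L[ℂ] H)
    (h : ∀ ξ : H, HasSum (fun j => ‖T j ξ‖ ^ 2) (‖ξ‖ ^ 2)) :
    ∃ L : H →ₗᵢ[ℂ] lp (fun _ : ℕ => H) 2, ∀ (ξ : H) (j : ℕ), (L ξ : ∀ _ : ℕ, H) j = T j ξ := by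
  have hmem (ξ : H) : Memℓp (fun j => T j ξ) 2 :=
    memℓp_gen (by simpa using (h ξ).summable)
  refine ⟨{ toFun := fun ξ => ⟨fun j => T j ξ, hmem ξ⟩
            map_add' := fun x y => by ext j; exact map_add (T j) x y
            map_smul' := fun c x => by ext j; exact map_smul (T j) c x
            norm_map' := fun ξ => ?_ }, fun _ _ => rfl⟩
  rw [← sq_eq_sq₀ (norm_nonneg _) (norm_nonneg _), ← (h ξ).tsum_eq]
  simpa using lp.norm_rpow_eq_tsum (p := 2) (by simp)
    (⟨fun j => T j ξ, hmem ξ⟩ : lp (fun _ : ℕ => H) 2)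

end

/-- Let `(A,B)` be a Pythagorean pair on a complex Hilbert space `H` such that
`Aⁿ ξ → 0` and `Bⁿ ξ → 0` for every `ξ ∈ H`. Then for every `ξ`,
`∑_{j=0}^∞ ‖A B^j ξ‖² = ‖ξ‖²` and `∑_{j=0}^∞ ‖B A^j ξ‖² = ‖ξ‖²`; consequently the maps
`L_∞ : ξ ↦ (A B^j ξ)_j` and `R_∞ : ξ ↦ (B A^j ξ)_j` are well-defined linear isometries from
`H` into `ℓ²(ℕ, H)`. -/
theorem pythagorean_pair_Linfty_Rinfty_isometries
    {H : Type*} [NormedAddCommGroup H] [InnerProductSpace ℂ H] [CompleteSpace H]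
    (A B : H →L[ℂ] H)
    (hPy : ContinuousLinearMap.adjoint A ∘L A + ContinuousLinearMap.adjoint B ∘L B = 1)
    (hA : ∀ ξ : H, Tendsto (fun n => (A ^ n) ξ) atTop (nhds 0))
    (hB : ∀ ξ : H, Tendsto (fun n => (B ^ n) ξ) atTop (nhds 0)) :
    (∀ ξ : H, HasSum (fun j : ℕ => ‖A ((B ^ j) ξ)‖ ^ 2) (‖ξ‖ ^ 2) ∧
        HasSum (fun j : ℕ => ‖B ((A ^ j) ξ)‖ ^ 2) (‖ξ‖ ^ 2)) ∧
      (∃ L : H →ₗᵢ[ℂ] lp (fun _ : ℕ => H) 2, ∀ (ξ : H) (j : ℕ), (L ξ : ∀ _ : ℕ, H) j = A ((B ^ j) ξ)) ∧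
      (∃ R : H →ₗᵢ[ℂ] lp (fun _ : ℕ => H) 2, ∀ (ξ : H) (j : ℕ), (R ξ : ∀ _ : ℕ, H) j = B ((A ^ j) ξ)) := by
  have hAB := norm_sq_add_of_pythagorean hPy
  have hBA (η : H) : ‖B η‖ ^ 2 + ‖A η‖ ^ 2 = ‖η‖ ^ 2 := by rw [add_comm, hAB]
  have sumL (ξ : H) := hasSum_norm_sq_of_tendsto hAB (hB ξ)
  have sumR (ξ : H) := hasSum_norm_sq_of_tendsto hBA (hA ξ)
  exact ⟨fun ξ => ⟨sumL ξ, sumR ξ⟩,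
    exists_linearIsometry_of_hasSum (fun j => A ∘L B ^ j) sumL,
    exists_linearIsometry_of_hasSum (fun j => B ∘L A ^ j) sumR⟩
end

section
/- Let (A,B) be a Pythagorean pair on a complex Hilbert space H such that B^n ξ → 0 in norm for every ξ ∈ H. For ξ ∈ H and i ≥ 0, let v_i ∈ ℓ²(ℕ, H) be the vector whose j-th coordinate is A B^j ξ for 0 ≤ j ≤ i, whose (i+1)-st coordinate is B^{i+1} ξ, and whose coordinates are 0 for j > i+1 (this is the image of ξ under the isometry Φ(L_i) associated to the right vine L_i). Then v_i converges in the norm of ℓ²(ℕ, H) to the vector (A B^j ξ)_{j≥0} as i → ∞; that is, the isometries Φ(L_i) converge to L_∞ in the strong operator topology. -/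
/-!
The Pythagorean identity gives `‖A η‖² = ‖η‖² - ‖B η‖²`, so with `η = B^j ξ` the series
`∑ ‖A B^j ξ‖²` telescopes; as `B^n ξ → 0` it converges, with sum `‖ξ‖²`. The `i`-th vine differs
from the limit vector only in the tail `j > i`, where the squared distance is at most twice the
tail of this convergent series plus `2 ‖B^{i+1} ξ‖²`, and both terms tend to `0`.
-/

open Filter

/-- The Pythagorean relation, evaluated as a quadratic form at `η`. -/
lemma pythagorean_norm_sq
    {H : Type*} [NormedAddCommGroup H] [InnerProductSpace ℂ H] [CompleteSpace H]
    (A B : H →L[ℂ] H)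
    (hPy : ContinuousLinearMap.adjoint A ∘L A + ContinuousLinearMap.adjoint B ∘L B = 1)
    (η : H) : ‖A η‖ ^ 2 = ‖η‖ ^ 2 - ‖B η‖ ^ 2 := by
  have h := congrArg (fun T : H →L[ℂ] H => RCLike.re (inner ℂ (T η) η)) hPy
  simp only [ContinuousLinearMap.add_apply, ContinuousLinearMap.comp_apply, inner_add_left,
    ContinuousLinearMap.adjoint_inner_left, ContinuousLinearMap.one_apply, map_add,
    inner_self_eq_norm_sq] at h
  linarith

/-- The telescoping sum `∑ ‖A B^j ξ‖² = ∑ (‖B^j ξ‖² - ‖B^{j+1} ξ‖²) = ‖ξ‖²`. -/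
lemma pythagorean_hasSum
    {H : Type*} [NormedAddCommGroup H] [InnerProductSpace ℂ H] [CompleteSpace H]
    (A B : H →L[ℂ] H)
    (hPy : ContinuousLinearMap.adjoint A ∘L A + ContinuousLinearMap.adjoint B ∘L B = 1)
    (ξ : H) (hB : Tendsto (fun n => (B ^ n) ξ) atTop (nhds 0)) :
    HasSum (fun j : ℕ => ‖A ((B ^ j) ξ)‖ ^ 2) (‖ξ‖ ^ 2) := by
  rw [hasSum_iff_tendsto_nat_of_nonneg (fun j => by positivity)]
  have h : ∀ n : ℕ, ∑ j ∈ Finset.range n, ‖A ((B ^ j) ξ)‖ ^ 2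
      = ‖ξ‖ ^ 2 - ‖(B ^ n) ξ‖ ^ 2 := by
    intro n
    induction n with
    | zero => simp
    | succ n ih =>
      rw [Finset.sum_range_succ, ih, pythagorean_norm_sq A B hPy, pow_succ' B n,
        ContinuousLinearMap.mul_apply]
      ring
  simp only [h]
  simpa using tendsto_const_nhds.sub (hB.norm.pow 2)

/-- Let `(A,B)` be a Pythagorean pair on a complex Hilbert space `H` such that
`Bⁿ ξ → 0` for every `ξ ∈ H`. For `ξ ∈ H` and `i ≥ 0`, let `v_i ∈ ℓ²(ℕ, H)` be the vector
whose `j`-th coordinate is `A B^j ξ` for `0 ≤ j ≤ i`, whose `(i+1)`-st coordinate is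
`B^{i+1} ξ`, and whose coordinates vanish for `j > i+1` (the image of `ξ` under `Φ(L_i)`).
Then the limit vector `(A B^j ξ)_j` lies in `ℓ²(ℕ, H)` and `v_i` converges to it in the norm
of `ℓ²(ℕ, H)` as `i → ∞`, i.e. `∑_j ‖(v_i)_j − A B^j ξ‖² → 0`; that is, the isometries
`Φ(L_i)` converge to `L_∞` in the strong operator topology. -/
theorem pythagorean_pair_vines_converge_to_Linfty
    {H : Type*} [NormedAddCommGroup H] [InnerProductSpace ℂ H] [CompleteSpace H]
    (A B : H →L[ℂ] H)
    (hPy : ContinuousLinearMap.adjoint A ∘L A + ContinuousLinearMap.adjoint B ∘L B = 1)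
    (hB : ∀ ξ : H, Tendsto (fun n => (B ^ n) ξ) atTop (nhds 0))
    (ξ : H) :
    Memℓp (fun j : ℕ => A ((B ^ j) ξ)) 2 ∧
      Tendsto
        (fun i : ℕ => ∑' j : ℕ,
          ‖(if j ≤ i then A ((B ^ j) ξ) else if j = i + 1 then (B ^ (i + 1)) ξ else 0)
            - A ((B ^ j) ξ)‖ ^ 2)
        atTop (nhds 0) := by
  have hs := (pythagorean_hasSum A B hPy ξ (hB ξ)).summable
  refine ⟨(memℓp_gen_iff (by norm_num)).2 (by simpa using hs), ?_⟩
  set a : ℕ → ℝ := fun j => ‖A ((B ^ j) ξ)‖ ^ 2 with ha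
  have ha0 : ∀ j, 0 ≤ a j := fun j => by positivity
  have hs1 : ∀ i : ℕ, Summable (fun j => if j ≤ i then 0 else a j) := fun i =>
    Summable.of_nonneg_of_le (fun j => by split_ifs <;> simp [ha0])
      (fun j => by split_ifs <;> simp [ha0]) hs
  have hs2 : ∀ i : ℕ,
      HasSum (fun j => if j = i + 1 then ‖(B ^ (i + 1)) ξ‖ ^ 2 else 0)
        (‖(B ^ (i + 1)) ξ‖ ^ 2) := fun i => hasSum_ite_eq (i + 1) _
  have htail : Tendsto (fun i : ℕ => ∑' j : ℕ, if j ≤ i then 0 else a j) atTop (nhds 0) := by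
    have h := tendsto_tsum_of_dominated_convergence (𝓕 := atTop)
      (f := fun i j : ℕ => if j ≤ i then 0 else a j) (g := fun _ => (0 : ℝ)) (bound := a) hs
      (fun j => tendsto_const_nhds.congr' (by
        filter_upwards [eventually_ge_atTop j] with i hi
        simp [hi]))
      (Eventually.of_forall fun i j => by split_ifs <;> simp [ha0, abs_of_nonneg])
    simpa using h
  have hBn : Tendsto (fun i : ℕ => ‖(B ^ (i + 1)) ξ‖ ^ 2) atTop (nhds 0) := by
    simpa using (((hB ξ).comp (tendsto_add_atTop_nat 1)).norm.pow 2)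
  have hlim := (htail.const_mul 2).add (hBn.const_mul 2)
  rw [mul_zero, add_zero] at hlim
  refine squeeze_zero (fun i => tsum_nonneg fun j => by positivity) (fun i => ?_) hlim
  have hsum := ((hs1 i).hasSum.mul_left 2).add ((hs2 i).mul_left 2)
  have hle : ∀ j : ℕ,
      ‖(if j ≤ i then A ((B ^ j) ξ) else if j = i + 1 then (B ^ (i + 1)) ξ else 0)
            - A ((B ^ j) ξ)‖ ^ 2
      ≤ 2 * (if j ≤ i then 0 else a j)
        + 2 * (if j = i + 1 then ‖(B ^ (i + 1)) ξ‖ ^ 2 else 0) := by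
    intro j
    by_cases h1 : j ≤ i
    · have h2 : j ≠ i + 1 := by omega
      simp [h1, h2]
    · by_cases h2 : j = i + 1
      · subst h2
        simp only [h1, if_false, if_true, ha]
        have h3 := norm_sub_le ((B ^ (i + 1)) ξ) (A ((B ^ (i + 1)) ξ))
        have h4 := pow_le_pow_left₀ (norm_nonneg _) h3 2
        nlinarith [sq_nonneg (‖(B ^ (i + 1)) ξ‖ - ‖A ((B ^ (i + 1)) ξ)‖)]
      · simp only [h1, h2, if_false, zero_sub, norm_neg]
        linarith [ha0 j]
  exact (Summable.of_nonneg_of_le (fun j => by positivity) hle hsum.summable).tsum_le_tsum hle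
    hsum.summable |>.trans_eq hsum.tsum_eq
end

section
/- Let (A,B) be a Pythagorean pair on a complex Hilbert space H such that A^n ξ → 0 and B^n ξ → 0 in norm for every ξ ∈ H. Then for every ξ ∈ H, lim_{i→∞} ( ⟨A^{i+1} ξ, A ξ⟩ + Σ_{k=1}^{i} ⟨B A^{i+1−k} ξ, A B^k ξ⟩ + ⟨B ξ, B^{i+1} ξ⟩ ) = 0. (This quantity equals the matrix coefficient ⟨σ([L_i, R_i]) ξ, ξ⟩ = ⟨Φ(R_i) ξ, Φ(L_i) ξ⟩ of the Pythagorean representation at the vine elements [L_i, R_i] of Thompson's group F.) -/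
open Filter
open scoped InnerProductSpace

/-!
Since `‖A η‖² + ‖B η‖² = ‖η‖²`, the sum of `‖B Aʲ ξ‖²` over `j` telescopes and is at most `‖ξ‖²`;
symmetrically for `‖A Bᵏ ξ‖²`. By Cauchy–Schwarz the middle sum is therefore bounded by a
convolution of two square-summable sequences, and such a convolution tends to zero
(`tendsto_convolution_zero`). The two outer terms vanish in the limit because `Aⁿ ξ → 0` and
`Bⁿ ξ → 0`.
-/

/-- The convolution of two nonnegative square-summable sequences tends to zero. For `δ > 0`, the
part of `a (i + 1 - k) * b k` exceeding `δ * a (i + 1 - k) ^ 2` is dominated by `b k ^ 2 / (4 * δ)`,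
so its sum over `k` vanishes in the limit by Tannery's theorem; what remains is at most
`δ * ∑ a ^ 2`. -/
lemma tendsto_convolution_zero (a b : ℕ → ℝ) (ha0 : ∀ n, 0 ≤ a n) (hb0 : ∀ n, 0 ≤ b n)
    (ha : Summable fun n => a n ^ 2) (hb : Summable fun n => b n ^ 2) :
    Tendsto (fun i : ℕ => ∑ k ∈ Finset.Icc 1 i, a (i + 1 - k) * b k) atTop (nhds 0) := by
  have hat : Tendsto a atTop (nhds 0) := by
    have h := ha.tendsto_atTop_zero.sqrt
    simpa [Real.sqrt_sq (ha0 _)] using h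
  have hS : ∀ i : ℕ, ∑ k ∈ Finset.Icc 1 i, a (i + 1 - k) ^ 2 ≤ ∑' n, a n ^ 2 := by
    intro i
    have hinj : Set.InjOn (fun k => i + 1 - k) (Finset.Icc 1 i : Finset ℕ) := by
      intro x hx y hy hxy
      simp only [Finset.coe_Icc, Set.mem_Icc] at hx hy hxy
      omega
    rw [← Finset.sum_image (f := fun n => a n ^ 2) hinj]
    exact ha.sum_le_tsum _ fun n _ => sq_nonneg _
  have hS0 : 0 ≤ ∑' n, a n ^ 2 := tsum_nonneg fun n => sq_nonneg _
  have key : ∀ δ : ℝ, 0 < δ → Tendsto (fun i : ℕ => ∑ k ∈ Finset.Icc 1 i,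
      max 0 (a (i + 1 - k) * b k - δ * a (i + 1 - k) ^ 2)) atTop (nhds 0) := by
    intro δ hδ
    have hT := tendsto_tsum_of_dominated_convergence (𝓕 := atTop)
      (f := fun (i k : ℕ) => if k ∈ Finset.Icc 1 i then
        max 0 (a (i + 1 - k) * b k - δ * a (i + 1 - k) ^ 2) else 0)
      (g := fun _ => (0 : ℝ)) (bound := fun k => b k ^ 2 / (4 * δ)) (hb.div_const _) ?_ ?_
    · simp only [tsum_zero] at hT
      refine hT.congr fun i => ?_
      rw [tsum_eq_sum (s := Finset.Icc 1 i) fun k hk => if_neg hk]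
      exact Finset.sum_congr rfl fun k hk => if_pos hk
    · intro k
      have hak : Tendsto (fun i : ℕ => a (i + 1 - k)) atTop (nhds 0) :=
        hat.comp ((tendsto_sub_atTop_nat k).comp (tendsto_add_atTop_nat 1))
      have hm : Tendsto (fun i : ℕ => max 0 (a (i + 1 - k) * b k - δ * a (i + 1 - k) ^ 2))
          atTop (nhds 0) := by
        simpa using (tendsto_const_nhds (x := (0 : ℝ))).max
          ((hak.mul_const (b k)).sub ((hak.pow 2).const_mul δ))
      refine squeeze_zero (fun i => ?_) (fun i => ?_) hm
      · split_ifs <;> simp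
      · split_ifs <;> simp
    · refine Eventually.of_forall fun i k => ?_
      have hpos : 0 ≤ b k ^ 2 / (4 * δ) := by positivity
      split_ifs
      · rw [Real.norm_of_nonneg (le_max_left _ _)]
        refine max_le hpos ?_
        rw [le_div_iff₀ (by positivity)]
        nlinarith [sq_nonneg (b k - 2 * δ * a (i + 1 - k))]
      · simpa using hpos
  rw [Metric.tendsto_atTop]
  intro ε hε
  set S := ∑' n, a n ^ 2
  have hδ : 0 < ε / (2 * (S + 1)) := by positivity
  have hδS : ε / (2 * (S + 1)) * S ≤ ε / 2 := by
    rw [div_mul_eq_mul_div, div_le_div_iff₀ (by positivity) (by norm_num)]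
    nlinarith
  obtain ⟨N, hN⟩ := (Metric.tendsto_atTop.1 (key _ hδ)) (ε / 2) (by positivity)
  refine ⟨N, fun i hi => ?_⟩
  have h1 := hN i hi
  rw [Real.dist_0_eq_abs] at h1 ⊢
  rw [abs_of_nonneg (Finset.sum_nonneg fun k _ => mul_nonneg (ha0 _) (hb0 _))]
  have h2 : ∑ k ∈ Finset.Icc 1 i, a (i + 1 - k) * b k ≤
      ∑ k ∈ Finset.Icc 1 i, (max 0 (a (i + 1 - k) * b k - ε / (2 * (S + 1)) * a (i + 1 - k) ^ 2)
        + ε / (2 * (S + 1)) * a (i + 1 - k) ^ 2) :=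
    Finset.sum_le_sum fun k _ => by
      linarith [le_max_right 0 (a (i + 1 - k) * b k - ε / (2 * (S + 1)) * a (i + 1 - k) ^ 2)]
  rw [Finset.sum_add_distrib, ← Finset.mul_sum] at h2
  have h3 := mul_le_mul_of_nonneg_left (hS i) hδ.le
  linarith [(abs_lt.1 h1).2]

/-- The sum of `‖D (Cʲ ξ)‖²` over `j < n` telescopes to `‖ξ‖² - ‖Cⁿ ξ‖²`, hence is at most `‖ξ‖²`. -/
lemma summable_norm_sq_of_pythagorean {H : Type*} [NormedAddCommGroup H] [InnerProductSpace ℂ H]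
    (C D : H →L[ℂ] H) (h : ∀ η, ‖C η‖ ^ 2 + ‖D η‖ ^ 2 = ‖η‖ ^ 2) (ξ : H) :
    Summable fun n : ℕ => ‖D ((C ^ n) ξ)‖ ^ 2 := by
  refine summable_of_sum_range_le (c := ‖ξ‖ ^ 2) (fun n => sq_nonneg _) fun n => ?_
  have hsum : ∑ j ∈ Finset.range n, ‖D ((C ^ j) ξ)‖ ^ 2 = ‖ξ‖ ^ 2 - ‖(C ^ n) ξ‖ ^ 2 := by
    induction n with
    | zero => simp
    | succ n ih =>
      rw [Finset.sum_range_succ, ih, pow_succ' C n, mul_apply_eq_comp]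
      linarith [h ((C ^ n) ξ)]
  rw [hsum]
  linarith [sq_nonneg ‖(C ^ n) ξ‖]

/-- Let `(A,B)` be a Pythagorean pair on a complex Hilbert space `H` with
`Aⁿ ξ → 0` and `Bⁿ ξ → 0` for every `ξ ∈ H`. Then for every `ξ ∈ H`,
`lim_{i→∞} (⟨A^{i+1} ξ, A ξ⟩ + ∑_{k=1}^{i} ⟨B A^{i+1−k} ξ, A B^k ξ⟩ + ⟨B ξ, B^{i+1} ξ⟩) = 0`.
(This is the matrix coefficient `⟨σ([L_i, R_i]) ξ, ξ⟩ = ⟨Φ(R_i) ξ, Φ(L_i) ξ⟩` of the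
Pythagorean representation at the vine elements of Thompson's group `F`.) -/
theorem pythagorean_pair_vine_coefficients_vanish
    {H : Type*} [NormedAddCommGroup H] [InnerProductSpace ℂ H] [CompleteSpace H]
    (A B : H →L[ℂ] H)
    (hPy : ContinuousLinearMap.adjoint A ∘L A + ContinuousLinearMap.adjoint B ∘L B = 1)
    (hA : ∀ ξ : H, Tendsto (fun n => (A ^ n) ξ) atTop (nhds 0))
    (hB : ∀ ξ : H, Tendsto (fun n => (B ^ n) ξ) atTop (nhds 0))
    (ξ : H) :
    Tendsto
      (fun i : ℕ =>
        ⟪(A ^ (i + 1)) ξ, A ξ⟫_ℂ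
          + (∑ k ∈ Finset.Icc 1 i, ⟪B ((A ^ (i + 1 - k)) ξ), A ((B ^ k) ξ)⟫_ℂ)
          + ⟪B ξ, (B ^ (i + 1)) ξ⟫_ℂ)
      atTop (nhds 0) := by
  have hnorm : ∀ η, ‖A η‖ ^ 2 + ‖B η‖ ^ 2 = ‖η‖ ^ 2 := by
    intro η
    have h1 := congrArg (fun T : H →L[ℂ] H => RCLike.re ⟪T η, η⟫_ℂ) hPy
    simpa [inner_add_left, ContinuousLinearMap.adjoint_inner_left,
      inner_self_eq_norm_sq_to_K, ← Complex.ofReal_pow] using h1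
  have hA1 : Tendsto (fun i : ℕ => ⟪(A ^ (i + 1)) ξ, A ξ⟫_ℂ) atTop (nhds 0) := by
    simpa using ((hA ξ).comp (tendsto_add_atTop_nat 1)).inner (tendsto_const_nhds (x := A ξ))
  have hB1 : Tendsto (fun i : ℕ => ⟪B ξ, (B ^ (i + 1)) ξ⟫_ℂ) atTop (nhds 0) := by
    simpa using (tendsto_const_nhds (x := B ξ)).inner ((hB ξ).comp (tendsto_add_atTop_nat 1))
  have hmid : Tendsto (fun i : ℕ =>
      ∑ k ∈ Finset.Icc 1 i, ⟪B ((A ^ (i + 1 - k)) ξ), A ((B ^ k) ξ)⟫_ℂ) atTop (nhds 0) := by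
    refine squeeze_zero_norm (fun i => ?_) (tendsto_convolution_zero
      (fun n => ‖B ((A ^ n) ξ)‖) (fun n => ‖A ((B ^ n) ξ)‖)
      (fun _ => norm_nonneg _) (fun _ => norm_nonneg _)
      (summable_norm_sq_of_pythagorean A B hnorm ξ)
      (summable_norm_sq_of_pythagorean B A (fun η => by rw [add_comm, hnorm]) ξ))
    exact (norm_sum_le _ _).trans (Finset.sum_le_sum fun k _ => norm_inner_le_norm _ _)
  simpa using (hA1.add hmid).add hB1
end

section
/- Let G be a group and let σ be a unitary representation of G on a complex Hilbert space H. Suppose that for every finite subset K ⊂ H and every ε > 0 there exists g ∈ G such that |⟨σ(g)ξ, ξ⟩| < ε for all ξ ∈ K. Then every finite-dimensional subspace V ⊆ H that is invariant under σ(g) for all g ∈ G is the zero subspace; that is, σ is weakly mixing. -/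
open scoped InnerProductSpace

/-!
By polarization, a matrix coefficient `⟨σ(g)v, e⟩` is the average, up to unimodular factors, of
the four diagonal coefficients at `e ± v` and `e ± i v`. The hypothesis therefore makes
`⟨σ(g)v, e⟩` simultaneously small for finitely many vectors `e`. Let `e` run over an orthonormal
basis of `V`: for `v ∈ V` the vector `σ(g)v` lies in `V`, so Parseval bounds
`‖v‖² = ‖σ(g)v‖²` by a sum of `dim V` small terms, which forces `v = 0`.
-/

/-- Polarization estimate: bounds on the four diagonal coefficients at `x ± y` and `x ± i y`
bound the off-diagonal one. -/
lemma norm_inner_map_lt_of_polarization {H : Type*} [NormedAddCommGroup H]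
    [InnerProductSpace ℂ H] (T : H →ₗ[ℂ] H) (x y : H) {ε : ℝ}
    (h₁ : ‖⟪T (x + y), x + y⟫_ℂ‖ < ε) (h₂ : ‖⟪T (x - y), x - y⟫_ℂ‖ < ε)
    (h₃ : ‖⟪T (x + Complex.I • y), x + Complex.I • y⟫_ℂ‖ < ε)
    (h₄ : ‖⟪T (x - Complex.I • y), x - Complex.I • y⟫_ℂ‖ < ε) :
    ‖⟪T y, x⟫_ℂ‖ < ε := by
  rw [inner_map_polarization, norm_div, Complex.norm_ofNat, div_lt_iff₀ (by norm_num)]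
  refine (norm_sub_le _ _).trans_lt ?_
  have h₅ := norm_add_le (⟪T (x + y), x + y⟫_ℂ - ⟪T (x - y), x - y⟫_ℂ)
    (Complex.I * ⟪T (x + Complex.I • y), x + Complex.I • y⟫_ℂ)
  have h₆ := norm_sub_le ⟪T (x + y), x + y⟫_ℂ ⟪T (x - y), x - y⟫_ℂ
  rw [norm_mul, Complex.norm_I, one_mul] at h₅ ⊢
  linarith

/-- Let `σ` be a unitary representation of a group `G` on a complex Hilbert space
`H`. If for every finite subset `K ⊂ H` and every `ε > 0` there exists `g ∈ G` with
`|⟨σ(g)ξ, ξ⟩| < ε` for all `ξ ∈ K`, then every finite-dimensional `σ`-invariant subspace of `H`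
is zero; i.e. `σ` is weakly mixing. -/
theorem almost_orthogonality_implies_weakly_mixing
    {G : Type*} [Group G] {H : Type*} [NormedAddCommGroup H] [InnerProductSpace ℂ H]
    (σ : G →* (H ≃ₗᵢ[ℂ] H))
    (h : ∀ (K : Finset H) (ε : ℝ), 0 < ε → ∃ g : G, ∀ ξ ∈ K, ‖⟪(σ g) ξ, ξ⟫_ℂ‖ < ε)
    (V : Submodule ℂ H) (hV : FiniteDimensional ℂ V)
    (hinv : ∀ g : G, ∀ v ∈ V, (σ g) v ∈ V) :
    V = ⊥ := by
  classical
  rw [Submodule.eq_bot_iff]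
  intro v hv
  by_contra hv0
  have hpos : 0 < ‖v‖ := norm_pos_iff.mpr hv0
  set n := Module.finrank ℂ V with hn
  let b := stdOrthonormalBasis ℂ V
  -- With `ε = ‖v‖ / (n + 1)`, the Parseval sum is at most `n * ε ^ 2 < ‖v‖ ^ 2`.
  set ε : ℝ := ‖v‖ / (n + 1) with hε
  have hεpos : 0 < ε := by positivity
  obtain ⟨g, hg⟩ := h (Finset.univ.biUnion fun i => {(b i : H) + v, (b i : H) - v,
    (b i : H) + Complex.I • v, (b i : H) - Complex.I • v}) ε hεpos
  have hcoef : ∀ i, ‖⟪σ g v, (b i : H)⟫_ℂ‖ < ε := fun i => by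
    refine norm_inner_map_lt_of_polarization (σ g).toLinearEquiv.toLinearMap (b i : H) v
      (hg _ ?_) (hg _ ?_) (hg _ ?_) (hg _ ?_) <;>
    exact Finset.mem_biUnion.mpr ⟨i, Finset.mem_univ i, by simp⟩
  have hparseval : ∑ i, ‖⟪σ g v, (b i : H)⟫_ℂ‖ ^ 2 = ‖v‖ ^ 2 := by
    have := b.sum_sq_norm_inner_left ⟨σ g v, hinv g v hv⟩
    simpa using this
  have hle : ‖v‖ ^ 2 ≤ n * ε ^ 2 := by
    rw [← hparseval]
    calc ∑ i, ‖⟪σ g v, (b i : H)⟫_ℂ‖ ^ 2 ≤ ∑ _i : Fin n, ε ^ 2 := by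
          gcongr with i
          exact (hcoef i).le
      _ = n * ε ^ 2 := by simp
  have hmul : ‖v‖ = ε * (n + 1) := by rw [hε]; field_simp
  rw [hmul] at hle
  have hn0 : (0 : ℝ) ≤ n := n.cast_nonneg
  have hε2 : 0 < ε ^ 2 := by positivity
  nlinarith [mul_nonneg hε2.le hn0, mul_nonneg hε2.le (mul_nonneg hn0 hn0)]
end

section
/- Let G be an infinite torsion-free group (g^n = 1 for some n ≥ 1 implies g = 1), let σ be a mixing unitary representation of G on a complex Hilbert space H (for every ξ ∈ H, g ↦ ⟨σ(g)ξ, ξ⟩ tends to 0 along the cofinite filter on G), and let K ⊆ G be a subgroup with K ≠ {1}. Then every finite-dimensional subspace V ⊆ H that is invariant under σ(k) for all k ∈ K is the zero subspace; that is, the restriction of σ to any non-trivial subgroup is weakly mixing. (This is the key step showing that mixing implies Ind-mixing for torsion-free groups.) -/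
open Filter
open scoped InnerProductSpace

/-!
A nontrivial `k ∈ K` has infinite order, so `n ↦ k ^ n` tends to infinity in `G`. If `V ≠ 0`,
the restriction of `σ k` to `V` has an eigenvector `v`, whose eigenvalue `c` has modulus one
because `σ k` is isometric. Hence `‖⟪σ (k ^ n) v, v⟫‖ = ‖v‖ ^ 2` for every `n`, which
contradicts mixing.
-/

/-- Let `G` be an infinite torsion-free group, `σ` a mixing unitary representation
of `G` on a complex Hilbert space `H`, and `K ⊆ G` a non-trivial subgroup. Then every
finite-dimensional subspace of `H` invariant under `σ(k)` for all `k ∈ K` is zero; i.e. the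
restriction of `σ` to any non-trivial subgroup is weakly mixing. (This is the key step showing
that mixing implies Ind-mixing for torsion-free groups.) -/
theorem mixing_restriction_weakly_mixing_of_torsionFree
    {G : Type*} [Group G] [Infinite G]
    (htf : ∀ (g : G) (n : ℕ), 1 ≤ n → g ^ n = 1 → g = 1)
    {H : Type*} [NormedAddCommGroup H] [InnerProductSpace ℂ H]
    (σ : G →* (H ≃ₗᵢ[ℂ] H))
    (hmix : ∀ ξ : H, Tendsto (fun g : G => ⟪(σ g) ξ, ξ⟫_ℂ) cofinite (nhds 0))
    (K : Subgroup G) (hK : K ≠ ⊥)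
    (V : Submodule ℂ H) (hV : FiniteDimensional ℂ V)
    (hinv : ∀ k ∈ K, ∀ v ∈ V, (σ k) v ∈ V) :
    V = ⊥ := by
  by_contra hne
  obtain ⟨k, hkK, hk1⟩ := K.bot_or_exists_ne_one.resolve_left hK
  have hord : ¬ IsOfFinOrder k := by
    intro h
    obtain ⟨n, hn, hkn⟩ := isOfFinOrder_iff_pow_eq_one.1 h
    exact hk1 (htf k n hn hkn)
  have : Nontrivial V := Submodule.nontrivial_iff_ne_bot.2 hne
  let T : Module.End ℂ V := ((σ k).toLinearEquiv.toLinearMap).restrict (hinv k hkK)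
  obtain ⟨c, hc⟩ := Module.End.exists_eigenvalue T
  obtain ⟨w, hw⟩ := hc.exists_hasEigenvector
  have hw0 : (w : H) ≠ 0 := fun h => hw.2 (Subtype.ext h)
  have hkw : σ k (w : H) = c • (w : H) := congrArg Subtype.val hw.apply_eq_smul
  have hc1 : ‖c‖ = 1 := by
    have h := (σ k).norm_map (w : H)
    rw [hkw, norm_smul] at h
    exact mul_right_cancel₀ (norm_ne_zero_iff.2 hw0) (h.trans (one_mul _).symm)
  have hpow : ∀ n : ℕ, σ (k ^ n) (w : H) = c ^ n • (w : H) := by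
    intro n
    induction n with
    | zero => simp
    | succ n ih =>
      rw [pow_succ, map_mul, LinearIsometryEquiv.coe_mul, Function.comp_apply, hkw, map_smul,
        ih, smul_smul, pow_succ']
  have hlim : Tendsto (fun n : ℕ => ‖⟪σ (k ^ n) (w : H), (w : H)⟫_ℂ‖) cofinite (nhds 0) := by
    simpa using ((hmix w).comp
      (injective_pow_iff_not_isOfFinOrder.2 hord).tendsto_cofinite).norm
  have hconst : (fun n : ℕ => ‖⟪σ (k ^ n) (w : H), (w : H)⟫_ℂ‖) =
      fun _ => ‖(w : H)‖ ^ 2 := by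
    funext n
    rw [hpow, inner_smul_left]
    simp [hc1]
  rw [hconst] at hlim
  exact pow_ne_zero 2 (norm_ne_zero_iff.2 hw0) (tendsto_nhds_unique tendsto_const_nhds hlim)
end
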